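/- arXiv:1906.00033 — 2 statements merged into one kernel-verified Lean document; each statement's English description precedes it below -/
import Mathlib

section
/- Let φ : A → B be a surjective *-homomorphism between C*-algebras. Then the induced map Û₀(A) → Û₀(B) has the homotopy lifting property with respect to all cubes: for every n ≥ 0, every continuous map H : [0,1]ⁿ × [0,1] → Û₀(B), and every continuous map h : [0,1]ⁿ → Û₀(A) with φ(h(s)) = H(s, 0) for all s ∈ [0,1]ⁿ, there exists a continuous map H̃ : [0,1]ⁿ × [0,1] → Û₀(A) with H̃(s, 0) = h(s) and φ(H̃(s, t)) = H(s, t) for all s, t. -/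
/-!
Working in the unitizations, `u` is a quasi-unitary of `A` iff `1 - u` is unitary. Two ingredients
make lifts along `φ` continuous in parameters.

* Bartle-Graves (`exists_continuous_rightInverse`): a surjective bounded linear map of Banach
  spaces has a continuous, generally nonlinear, right inverse `ρ` with `ρ 0 = 0`.
* The Cayley transform `k ↦ (1 + ik)(1 - ik)⁻¹` sends self-adjoint elements to unitaries, and every
  unitary `W` with `‖W - 1‖ < 2` is the transform of the self-adjoint
  `-i(W - 1)(W + 1)⁻¹`, which depends continuously on `W` and lies in the non-unital algebra when
  `W` has scalar part `1`. Self-adjoint elements lift by taking the real part of `ρ`, so unitaries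
  near `1` lift continuously, with `1` lifting to `1`.

Hence (`lift_step`), if two families `F`, `G` of quasi-unitaries of `B` are pointwise at distance
less than `2` and `F` lifts to `F'`, then `G` lifts to a family that agrees with `F'` wherever
`F = G`: multiply `1 - F'` by a lift of `(1 - F)⋆ (1 - G)`.

For a homotopy `H`, uniform continuity gives `N` such that the families
`(s, t) ↦ H (s, t * i / (N + 1))`, `i = 0, …, N + 1`, are successively closer than `2`. They all
agree at `t = 0`, the one with `i = 0` is lifted by `h`, and the one with `i = N + 1` is `H`, so
`lift_step` applied `N + 1` times yields the lift. Its values are joined to those of `h` along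
the `t`-direction, hence lie in `Û₀(A)`.
-/

open unitInterval

/-- The quasi-multiplication `a · b = a + b - a * b`. -/
def qmul {A : Type*} [NonUnitalRing A] (a b : A) : A := a + b - a * b

/-- `u` is a quasi-unitary if `u · u* = u* · u = 0`. -/
def IsQuasiUnitary {A : Type*} [NonUnitalRing A] [StarRing A] (u : A) : Prop :=
  qmul u (star u) = 0 ∧ qmul (star u) u = 0

lemma isQuasiUnitary_zero {A : Type*} [NonUnitalRing A] [StarRing A] :
    IsQuasiUnitary (0 : A) := by constructor <;> simp [qmul]

/-- The space `Û(A)` of quasi-unitaries of `A`, with the subspace (norm) topology. -/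
abbrev QU (A : Type*) [NonUnitalNormedRing A] [StarRing A] : Type _ :=
  {u : A // IsQuasiUnitary u}

/-- The space `Û₀(A)` of quasi-unitaries of `A` joined to `0` by a path of
quasi-unitaries, with the subspace (norm) topology. -/
abbrev QU0 (A : Type*) [NonUnitalNormedRing A] [StarRing A] : Type _ :=
  {u : A // ∃ h : IsQuasiUnitary u, Joined (⟨u, h⟩ : QU A) ⟨0, isQuasiUnitary_zero⟩}

open Filter Topology

/-! ### A continuous right inverse -/

/-- One step of successive approximation: a continuous `r` bounded by `ε` has a continuous
approximate lift with error `ε / 2` and norm at most `C * ε`. Locally a constant works, and the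
constraints are convex, so a partition of unity glues the constants. -/
theorem bartleGraves_step {E F : Type*} [NormedAddCommGroup E] [NormedSpace ℂ E]
    [NormedAddCommGroup F] [NormedSpace ℂ F] (f : E →L[ℂ] F) {C ε : ℝ} (hε : 0 < ε)
    (hC : 0 ≤ C) (hf : ∀ y, ∃ x, f x = y ∧ ‖x‖ ≤ C * ‖y‖) (r : C(F, F)) (hr : ∀ y, ‖r y‖ ≤ ε) :
    ∃ g : C(F, E), ∀ y, ‖g y‖ ≤ C * ε ∧ ‖f (g y) - r y‖ ≤ ε / 2 := by
  refine exists_continuous_forall_mem_convex_of_local_const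
    (t := fun y => {c : E | ‖c‖ ≤ C * ε ∧ ‖f c - r y‖ ≤ ε / 2}) (fun y => ?_) (fun y => ?_)
  · have h1 : Convex ℝ {c : E | ‖c‖ ≤ C * ε} := by
      simpa [Metric.closedBall, dist_zero_right] using convex_closedBall (0 : E) (C * ε)
    have h2 : Convex ℝ {c : E | ‖f c - r y‖ ≤ ε / 2} := by
      have := (convex_closedBall (r y) (ε / 2)).linear_preimage
        ((f.restrictScalars ℝ : E →L[ℝ] F) : E →ₗ[ℝ] F)
      simpa [Metric.closedBall, dist_eq_norm, Set.preimage] using this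
    exact h1.inter h2
  · obtain ⟨c, hc, hcn⟩ := hf (r y)
    refine ⟨c, ?_⟩
    have hcont : ContinuousAt (fun z => ‖f c - r z‖) y := by fun_prop
    have := hcont.eventually_lt_const (u := ε / 2) (by simp [hc, hε])
    filter_upwards [this] with z hz
    exact ⟨hcn.trans (by gcongr; exact hr y), hz.le⟩

/-- The Bartle-Graves theorem: the right inverse is a uniform limit of continuous approximate right
inverses with errors `2⁻ᵏ`. -/
theorem exists_continuous_rightInverse {E F : Type*} [NormedAddCommGroup E] [NormedSpace ℂ E]
    [CompleteSpace E] [NormedAddCommGroup F] [NormedSpace ℂ F] [CompleteSpace F]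
    (f : E →L[ℂ] F) (hf : Function.Surjective f) :
    ∃ ρ : C(F, E), (∀ y, f (ρ y) = y) ∧ ρ 0 = 0 := by
  obtain ⟨C, hC, hpre⟩ := f.exists_preimage_norm_le hf
  let Q (k : ℕ) (G : C(F, E)) : Prop := ∀ y, ‖f (G y) - y‖ ≤ (1 / 2 : ℝ) ^ k
  have step : ∀ (k : ℕ) (G : Subtype (Q k)), ∃ G' : Subtype (Q (k + 1)),
      ∀ y, ‖G'.1 y - G.1 y‖ ≤ C * (1 / 2 : ℝ) ^ k := by
    intro k G
    obtain ⟨g, hg⟩ := bartleGraves_step f (C := C) (ε := (1 / 2 : ℝ) ^ k) (by positivity) hC.le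
      hpre ⟨fun y => y - f (G.1 y), by fun_prop⟩
      (fun y => by simpa [norm_sub_rev] using G.2 y)
    refine ⟨⟨G.1 + g, fun y => ?_⟩, fun y => by simpa using (hg y).1⟩
    have := (hg y).2
    simp only [ContinuousMap.coe_mk] at this
    have e : f ((G.1 + g) y) - y = f (g y) - (y - f (G.1 y)) := by simp; abel
    rw [e, pow_succ]
    linarith
  choose next hnext using step
  -- `bartleGraves_step` does not apply to the first approximation, since the identity of `F` is
  -- unbounded, but without a norm bound the same gluing works.
  have start : Nonempty (Subtype (Q 0)) := by
    obtain ⟨g, hg⟩ := exists_continuous_forall_mem_convex_of_local_const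
      (t := fun y : F => {c : E | ‖f c - y‖ ≤ 1}) (fun y => by
        have := (convex_closedBall y 1).linear_preimage
          ((f.restrictScalars ℝ : E →L[ℝ] F) : E →ₗ[ℝ] F)
        simpa [Metric.closedBall, dist_eq_norm, Set.preimage] using this) (fun y => by
        obtain ⟨c, hc⟩ := hf y
        refine ⟨c, ?_⟩
        have hcont : ContinuousAt (fun z => ‖f c - z‖) y := by fun_prop
        have := hcont.eventually_lt_const (u := 1) (by simp [hc])
        filter_upwards [this] with z hz using hz.le)
    exact ⟨⟨g, fun y => by simpa using hg y⟩⟩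
  obtain ⟨G₀⟩ := start
  let G : ∀ k, Subtype (Q k) := fun k => Nat.rec G₀ (fun k g => next k g) k
  have hG : ∀ y k, dist ((G k).1 y) ((G (k + 1)).1 y) ≤ C * (1 / 2 : ℝ) ^ k := by
    intro y k
    rw [dist_comm, dist_eq_norm]
    exact hnext k (G k) y
  have hlim : ∀ y, ∃ x, Tendsto (fun k => (G k).1 y) atTop (𝓝 x) := fun y =>
    cauchySeq_tendsto_of_complete (cauchySeq_of_le_geometric _ C (by norm_num) (hG y))
  choose s hs using hlim
  have hunif : TendstoUniformly (fun k y => (G k).1 y) s atTop := by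
    rw [Metric.tendstoUniformly_iff]
    intro ε hε
    have h0 : Tendsto (fun k : ℕ => C * (1 / 2 : ℝ) ^ k / (1 - 1 / 2)) atTop (𝓝 0) := by
      have := (tendsto_pow_atTop_nhds_zero_of_lt_one (r := (1 / 2 : ℝ))
        (by norm_num) (by norm_num)).const_mul C |>.div_const (1 - 1 / 2)
      simpa using this
    filter_upwards [h0.eventually_lt_const hε] with k hk y
    rw [dist_comm]
    exact (dist_le_of_le_geometric_of_tendsto _ C (by norm_num) (hG y) (hs y) k).trans_lt hk
  have hscont : Continuous s :=
    hunif.continuous (Frequently.of_forall fun k => (G k).1.continuous)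
  have hfs : ∀ y, f (s y) = y := by
    intro y
    have h1 : Tendsto (fun k => f ((G k).1 y)) atTop (𝓝 (f (s y))) :=
      (f.continuous.tendsto _).comp (hs y)
    have h2 : Tendsto (fun k => f ((G k).1 y)) atTop (𝓝 y) := by
      rw [tendsto_iff_norm_sub_tendsto_zero]
      exact squeeze_zero (fun _ => norm_nonneg _) (fun k => (G k).2 y)
        (tendsto_pow_atTop_nhds_zero_of_lt_one (by norm_num) (by norm_num))
    exact tendsto_nhds_unique h1 h2
  exact ⟨⟨fun y => s y - s 0, by fun_prop⟩, fun y => by simp [hfs], by simp⟩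

/-! ### The Cayley transform -/

theorem isUnit_one_sub_I_smul {E : Type*} [CStarAlgebra E] {k : E} (hk : IsSelfAdjoint k) :
    IsUnit (1 - Complex.I • k) := by
  have h : (-Complex.I : ℂ) ∉ spectrum ℂ k := fun hm => by
    have := congrArg Complex.im (hk.mem_spectrum_eq_re hm)
    simp at this
  rw [spectrum.notMem_iff] at h
  have h2 := h.smul (Units.mk0 Complex.I Complex.I_ne_zero)
  have e : (Units.mk0 Complex.I Complex.I_ne_zero) • (algebraMap ℂ E (-Complex.I) - k)
      = 1 - Complex.I • k := by
    rw [Units.smul_def, Units.val_mk0, smul_sub, Algebra.algebraMap_eq_smul_one, smul_smul]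
    simp
  rwa [e] at h2

/-- The Cayley transform `(1 + ik)(1 - ik)⁻¹`, a unitary when `k` is self-adjoint. -/
noncomputable def cayley {E : Type*} [CStarAlgebra E] (k : E) : E :=
  (1 + Complex.I • k) * Ring.inverse (1 - Complex.I • k)

theorem cayley_mul {E : Type*} [CStarAlgebra E] {k : E} (hk : IsSelfAdjoint k) :
    cayley k * (1 - Complex.I • k) = 1 + Complex.I • k := by
  rw [cayley, mul_assoc, Ring.inverse_mul_cancel _ (isUnit_one_sub_I_smul hk), mul_one]

theorem cayley_mem_unitary {E : Type*} [CStarAlgebra E] {k : E} (hk : IsSelfAdjoint k) :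
    cayley k ∈ unitary E := by
  have hu := isUnit_one_sub_I_smul hk
  have hs : star (1 - Complex.I • k) = 1 + Complex.I • k := by simp [hk.star_eq]
  have hu' : IsUnit (1 + Complex.I • k) := hs ▸ hu.star
  have hs' : star (1 + Complex.I • k) = 1 - Complex.I • k := by rw [← hs, star_star]
  have hc : Commute (1 - Complex.I • k) (1 + Complex.I • k) := by
    have : Commute (Complex.I • k) (1 + Complex.I • k) :=
      (Commute.one_right _).add_right (Commute.refl _)
    exact (Commute.one_left _).sub_left this
  have key := cayley_mul hk
  have hcu : IsUnit (cayley k) := hu'.mul (isUnit_ringInverse.mpr hu)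
  have key' := congrArg star key
  rw [star_mul, hs, hs'] at key'
  have h1 : star (cayley k) * cayley k = 1 := by
    have : (1 + Complex.I • k) * (star (cayley k) * cayley k) * (1 - Complex.I • k)
        = (1 + Complex.I • k) * 1 * (1 - Complex.I • k) := by
      rw [← mul_assoc, key', mul_assoc, key, mul_one, hc.eq]
    exact hu'.mul_left_cancel (hu.mul_right_cancel this)
  refine ⟨h1, ?_⟩
  apply hcu.mul_right_cancel
  rw [mul_assoc, h1, mul_one, one_mul]

/-- The inverse Cayley transform `-i(W - 1)(W + 1)⁻¹`, meaningful when `W + 1` is invertible. -/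
noncomputable def cayleyInv {E : Type*} [CStarAlgebra E] (W : E) : E :=
  -Complex.I • ((W - 1) * Ring.inverse (W + 1))

theorem isUnit_add_one {E : Type*} [CStarAlgebra E] {W : E} (hW : ‖W - 1‖ < 2) :
    IsUnit (W + 1) := by
  have h : ‖-((1 / 2 : ℂ) • (W - 1))‖ < 1 := by
    rw [norm_neg, norm_smul]; norm_num; linarith
  have h2 := (isUnit_one_sub_of_norm_lt_one h).smul (Units.mk0 (2 : ℂ) two_ne_zero)
  have e : (Units.mk0 (2 : ℂ) two_ne_zero) • (1 - -((1 / 2 : ℂ) • (W - 1))) = W + 1 := by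
    rw [Units.smul_def, Units.val_mk0, sub_neg_eq_add, smul_add, smul_smul]
    norm_num
    rw [two_smul]; abel
  rwa [e] at h2

theorem cayleyInv_mul {E : Type*} [CStarAlgebra E] {W : E} (hW : ‖W - 1‖ < 2) :
    (Complex.I • cayleyInv W) * (W + 1) = W - 1 := by
  rw [cayleyInv, smul_smul, mul_neg, Complex.I_mul_I, neg_neg, one_smul, mul_assoc,
    Ring.inverse_mul_cancel _ (isUnit_add_one hW), mul_one]

theorem isSelfAdjoint_cayleyInv {E : Type*} [CStarAlgebra E] {W : E} (hu : W ∈ unitary E)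
    (hW : ‖W - 1‖ < 2) : IsSelfAdjoint (cayleyInv W) := by
  have hunit := isUnit_add_one hW
  have key := cayleyInv_mul hW
  have h1 := Unitary.star_mul_self_of_mem hu
  have hs : star (W + 1) = star W * (W + 1) := by
    rw [mul_add, h1, mul_one, star_add, star_one, add_comm]
  have hs' : star (W - 1) = - (star W * (W - 1)) := by
    rw [mul_sub, h1, mul_one, star_sub, star_one]; abel
  have key' := congrArg star key
  have hstar : IsUnit (star (W + 1)) := hunit.star
  -- With `k = cayleyInv W`, conjugating by the invertible `W + 1` reduces `(ik)⋆ = -ik` to the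
  -- identity `(W - 1)⋆ (W + 1) = -(W + 1)⋆ (W - 1)`.
  rw [star_mul, hs'] at key'
  have e : star (W + 1) * star (Complex.I • cayleyInv W) * (W + 1)
      = star (W + 1) * (-(Complex.I • cayleyInv W)) * (W + 1) := by
    rw [key', mul_assoc (star (W + 1)), neg_mul, neg_mul, key, star_add, star_one]
    simp only [mul_add, mul_sub, add_mul, sub_mul, mul_neg, h1, one_mul, mul_one]
    abel
  have e2 := hstar.mul_left_cancel (by simpa [mul_assoc] using hunit.mul_right_cancel e)
  exact e2

/-- A unitary `W` with `‖W - 1‖ < 2` is determined by the defining equation of the Cayley transform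
of `cayleyInv W`. This form transfers along homomorphisms without mapping `Ring.inverse`. -/
theorem cayley_unique {E : Type*} [CStarAlgebra E] {W V : E} (hu : W ∈ unitary E)
    (hW : ‖W - 1‖ < 2)
    (hV : V * (1 - Complex.I • cayleyInv W) = 1 + Complex.I • cayleyInv W) : V = W := by
  have hunit := isUnit_one_sub_I_smul (isSelfAdjoint_cayleyInv hu hW)
  have key := cayleyInv_mul hW
  have hc : Commute W (Complex.I • cayleyInv W) := by
    have h1 : Commute W (W + 1) := (Commute.refl W).add_right (Commute.one_right W)
    have h2 : Commute W (W - 1) := (Commute.refl W).sub_right (Commute.one_right W)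
    have h3 : Commute W (Ring.inverse (W + 1)) := by
      rw [← (isUnit_add_one hW).unit_spec, Ring.inverse_unit]
      exact Commute.units_inv_right (by simp)
    exact ((h2.mul_right h3).smul_right _).smul_right _
  refine hunit.mul_right_cancel (hV.trans ?_)
  rw [mul_add, mul_one] at key
  rw [mul_sub, hc.eq, mul_one, eq_sub_iff_add_eq, add_assoc, add_comm (Complex.I • cayleyInv W),
    key, add_sub_cancel]

/-! ### Lifting quasi-unitaries -/

theorem isQuasiUnitary_iff {A : Type*} [NonUnitalCStarAlgebra A] (u : A) :
    IsQuasiUnitary u ↔ 1 - (u : Unitization ℂ A) ∈ unitary (Unitization ℂ A) := by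
  have e1 : star (1 - (u : Unitization ℂ A)) * (1 - (u : Unitization ℂ A))
      = 1 - (qmul (star u) u : A) := by
    simp only [qmul, star_sub, star_one, Unitization.inr_sub, Unitization.inr_add,
      Unitization.inr_mul, Unitization.inr_star]
    noncomm_ring
  have e2 : (1 - (u : Unitization ℂ A)) * star (1 - (u : Unitization ℂ A))
      = 1 - (qmul u (star u) : A) := by
    simp only [qmul, star_sub, star_one, Unitization.inr_sub, Unitization.inr_add,
      Unitization.inr_mul, Unitization.inr_star]
    noncomm_ring
  have e0 : ∀ a : A, (1 : Unitization ℂ A) - (a : Unitization ℂ A) = 1 ↔ a = 0 := fun a => by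
    rw [sub_eq_self, ← Unitization.inr_zero ℂ, Unitization.inr_injective.eq_iff]
  rw [Unitary.mem_iff, e1, e2, e0, e0, IsQuasiUnitary, and_comm]

theorem unitization_fst_sub {A : Type*} [NonUnitalCStarAlgebra A] (x y : Unitization ℂ A) :
    (x - y).fst = x.fst - y.fst := rfl

/-- A lift `F'` of the family `F` produces a lift of any family `G` at pointwise distance less than
`2` from `F`, unchanged wherever `F = G`. -/
theorem lift_step {A B Y : Type*} [NonUnitalCStarAlgebra A] [NonUnitalCStarAlgebra B]
    [TopologicalSpace Y] (φ : A →⋆ₙₐ[ℂ] B) (ρ : C(B, A)) (hρ : ∀ b, φ (ρ b) = b) (hρ0 : ρ 0 = 0)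
    {F G : Y → B} (hF : Continuous F) (hG : Continuous G) (qF : ∀ y, IsQuasiUnitary (F y))
    (qG : ∀ y, IsQuasiUnitary (G y)) (hFG : ∀ y, ‖F y - G y‖ < 2) {F' : Y → A}
    (hF' : Continuous F') (qF' : ∀ y, IsQuasiUnitary (F' y)) (hφF : ∀ y, φ (F' y) = F y) :
    ∃ G' : Y → A, Continuous G' ∧ (∀ y, IsQuasiUnitary (G' y)) ∧ (∀ y, φ (G' y) = G y) ∧
      ∀ y, F y = G y → G' y = F' y := by
  simp only [isQuasiUnitary_iff] at qF qG qF' ⊢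
  let U : Y → Unitization ℂ B := fun y => 1 - (F y : Unitization ℂ B)
  let W : Y → Unitization ℂ B := fun y => star (U y) * (1 - (G y : Unitization ℂ B))
  have hinrB : Continuous (fun b : B => (b : Unitization ℂ B)) := Unitization.continuous_inr
  have hinrA : Continuous (fun a : A => (a : Unitization ℂ A)) := Unitization.continuous_inr
  have hWu : ∀ y, W y ∈ unitary (Unitization ℂ B) := fun y =>
    mul_mem (Unitary.star_mem (qF y)) (qG y)
  have hUW : ∀ y, U y * W y = 1 - (G y : Unitization ℂ B) := fun y => by
    rw [← mul_assoc, Unitary.mul_star_self_of_mem (qF y), one_mul]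
  have hW : ∀ y, ‖W y - 1‖ < 2 := fun y => by
    have e : W y - 1 = star (U y) * ((F y - G y : B) : Unitization ℂ B) := by
      rw [← Unitary.star_mul_self_of_mem (qF y), ← mul_sub, Unitization.inr_sub]
      congr 1; abel
    rw [e, CStarRing.norm_mem_unitary_mul _ (Unitary.star_mem (qF y)), Unitization.norm_inr]
    exact hFG y
  have hWc : Continuous W := by
    have := hinrB.comp hF
    have := hinrB.comp hG
    simp only [W, U]
    fun_prop
  -- The self-adjoint inverse Cayley transform of `W` has scalar part `0`, so it comes from `B`.
  let k : Y → Unitization ℂ B := fun y => cayleyInv (W y)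
  have hkc : Continuous k := by
    have h1 : Continuous fun y => Ring.inverse (W y + 1) := continuous_iff_continuousAt.mpr fun y =>
      ContinuousAt.comp (f := fun y => W y + 1)
        (NormedRing.inverse_continuousAt (isUnit_add_one (hW y)).unit)
        (hWc.add continuous_const).continuousAt
    exact ((hWc.sub continuous_const).mul h1).const_smul (-Complex.I)
  have hksa : ∀ y, IsSelfAdjoint (k y) := fun y => isSelfAdjoint_cayleyInv (hWu y) (hW y)
  let b : Y → B := fun y => (k y).snd
  have hbc : Continuous b := Unitization.continuous_snd.comp hkc
  have hbk : ∀ y, (b y : Unitization ℂ B) = k y := fun y =>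
    Unitization.ext (by simp [k, cayleyInv, W, U, unitization_fst_sub]) rfl
  have hbsa : ∀ y, star (b y) = b y := fun y => by
    have := hksa y
    rw [← hbk] at this
    exact this.of_inr.star_eq
  -- A self-adjoint lift of `b`: the real part of `ρ ∘ b`.
  let a : Y → A := fun y => (1 / 2 : ℂ) • (ρ (b y) + star (ρ (b y)))
  have hac : Continuous a := by fun_prop
  have hasa : ∀ y, IsSelfAdjoint (a y : Unitization ℂ A) := fun y => by
    rw [Unitization.isSelfAdjoint_inr, isSelfAdjoint_iff]
    simp [a, add_comm]
  have hφa : ∀ y, φ (a y) = b y := fun y => by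
    simp only [a, map_smul, map_add, map_star, hρ, hbsa, ← two_smul ℂ (b y), smul_smul]
    norm_num
  let V : Y → Unitization ℂ A := fun y => cayley (a y : Unitization ℂ A)
  have hVu : ∀ y, V y ∈ unitary (Unitization ℂ A) := fun y => cayley_mem_unitary (hasa y)
  have hVc : Continuous V := by
    have h0 : Continuous fun y => Complex.I • (a y : Unitization ℂ A) :=
      (hinrA.comp hac).const_smul Complex.I
    have h1 : Continuous fun y => Ring.inverse (1 - Complex.I • (a y : Unitization ℂ A)) :=
      continuous_iff_continuousAt.mpr fun y =>
      ContinuousAt.comp (f := fun y => 1 - Complex.I • (a y : Unitization ℂ A))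
        (NormedRing.inverse_continuousAt (isUnit_one_sub_I_smul (hasa y)).unit)
        (continuous_const.sub h0).continuousAt
    exact (continuous_const.add h0).mul h1
  have hV1 : ∀ y, (V y).fst = 1 := fun y => by
    simpa [unitization_fst_sub] using congrArg (Unitization.fstHom ℂ A) (cayley_mul (hasa y))
  have hφV : ∀ y, Unitization.starMap φ (V y) = W y := fun y => by
    refine cayley_unique (hWu y) (hW y) ?_
    have := congrArg (Unitization.starMap φ) (cayley_mul (hasa y))
    simp only [map_mul, map_add, map_sub, map_one, map_smul, Unitization.starMap_inr, hφa, hbk]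
      at this
    exact this
  let P : Y → Unitization ℂ A := fun y => (1 - (F' y : Unitization ℂ A)) * V y
  have hG' : ∀ y, (((1 - P y).snd : A) : Unitization ℂ A) = 1 - P y := fun y =>
    Unitization.ext (by simp [P, hV1, unitization_fst_sub]) rfl
  refine ⟨fun y => (1 - P y).snd, ?_, fun y => ?_, fun y => ?_, fun y hy => ?_⟩
  · refine Unitization.continuous_snd.comp (continuous_const.sub ?_)
    exact (continuous_const.sub (hinrA.comp hF')).mul hVc
  · rw [hG', sub_sub_cancel]
    exact mul_mem (qF' y) (hVu y)
  · apply Unitization.inr_injective (R := ℂ)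
    rw [← Unitization.starMap_inr, hG']
    simp only [P, map_sub, map_mul, map_one, Unitization.starMap_inr, hφF, hφV]
    change 1 - U y * W y = _
    rw [hUW, sub_sub_cancel]
  · have hW1 : W y = 1 := by
      simp only [W, U, hy]
      exact Unitary.star_mul_self_of_mem (qG y)
    have hb0 : b y = 0 := by simp [b, k, cayleyInv, hW1]
    have hV : V y = 1 := by simp [V, a, hb0, hρ0, cayley]
    apply Unitization.inr_injective (R := ℂ)
    rw [hG']
    simp [P, hV]

/-- If `φ : A → B` is a surjective *-homomorphism of C*-algebras, then the induced map
`Û₀(A) → Û₀(B)` has the homotopy lifting property with respect to all cubes `[0,1]ⁿ`. -/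
theorem quasiUnitary_homotopy_lifting
    {A B : Type*} [NonUnitalCStarAlgebra A] [NonUnitalCStarAlgebra B]
    (φ : A →⋆ₙₐ[ℂ] B) (hφ : Function.Surjective φ) (n : ℕ)
    (H : C((Fin n → I) × I, QU0 B)) (h : C(Fin n → I, QU0 A))
    (hcomp : ∀ s : Fin n → I, φ ((h s : A)) = ((H (s, 0) : B))) :
    ∃ H' : C((Fin n → I) × I, QU0 A),
      (∀ s : Fin n → I, ((H' (s, 0) : A)) = ((h s : A))) ∧
      ∀ (s : Fin n → I) (t : I), φ ((H' (s, t) : A)) = ((H (s, t) : B)) := by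
  obtain ⟨ρ, hρ, hρ0⟩ := exists_continuous_rightInverse
    ((φ : A →ₗ[ℂ] B).mkContinuous 1 fun a => by
      simpa using NonUnitalStarAlgHom.norm_apply_le φ a) hφ
  change ∀ b, φ (ρ b) = b at hρ
  have hHc : Continuous fun p => (H p : B) := continuous_subtype_val.comp H.continuous
  obtain ⟨δ, hδ, hunif⟩ := Metric.uniformContinuous_iff.mp
    (CompactSpace.uniformContinuous_of_continuous hHc) 2 two_pos
  obtain ⟨N, hN⟩ := exists_nat_one_div_lt hδ
  -- `c i t = t * (i / (N + 1))`, the factor being cut off at `1` so that `c i t ∈ [0, 1]` for all `i`.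
  let c : ℕ → I → I := fun i t => t * Set.projIcc 0 1 zero_le_one ((i : ℝ) / (N + 1))
  have hcc : ∀ i, Continuous (c i) := fun i => by fun_prop
  have hc0 : ∀ i, c i 0 = 0 := fun i => by simp [c]
  have hcN : ∀ t, c (N + 1) t = t := fun t => by
    have : ((N + 1 : ℕ) : ℝ) / (N + 1) = 1 := by push_cast; exact div_self (by positivity)
    simp only [c, this, Set.projIcc_right]
    exact mul_one t
  have hdist : ∀ i t, dist (c i t) (c (i + 1) t) < δ := fun i t => by
    refine lt_of_le_of_lt ?_ hN
    have hmono : dist (Set.projIcc (0 : ℝ) 1 zero_le_one ((i : ℝ) / (N + 1)))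
        (Set.projIcc (0 : ℝ) 1 zero_le_one (((i + 1 : ℕ) : ℝ) / (N + 1))) ≤ 1 / ((N : ℝ) + 1) := by
      refine ((LipschitzWith.projIcc zero_le_one).dist_le_mul _ _).trans ?_
      rw [NNReal.coe_one, one_mul, dist_comm, Real.dist_eq, ← sub_div]
      push_cast
      rw [add_sub_cancel_left, abs_of_nonneg (by positivity)]
    refine le_trans ?_ hmono
    rw [Subtype.dist_eq, Subtype.dist_eq, Real.dist_eq, Real.dist_eq]
    simp only [c, Set.Icc.coe_mul, ← mul_sub, abs_mul]
    exact mul_le_of_le_one_left (abs_nonneg _) (abs_le.mpr ⟨by linarith [t.2.1], t.2.2⟩)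
  have main : ∀ i : ℕ, ∃ L : (Fin n → I) × I → A, Continuous L ∧ (∀ p, IsQuasiUnitary (L p)) ∧
      (∀ p, φ (L p) = (H (p.1, c i p.2) : B)) ∧ ∀ s, L (s, 0) = (h s : A) := by
    intro i
    induction i with
    | zero =>
      refine ⟨fun p => (h p.1 : A), by fun_prop, fun p => (h p.1).2.1, fun p => ?_, fun s => rfl⟩
      have : c 0 p.2 = 0 := by simp [c, Set.projIcc_left]
      rw [this, hcomp]
    | succ i ih =>
      obtain ⟨L, hLc, hLq, hLφ, hL0⟩ := ih
      have hcont : ∀ j, Continuous fun p : (Fin n → I) × I => (H (p.1, c j p.2) : B) :=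
        fun j => hHc.comp (continuous_fst.prodMk ((hcc j).comp continuous_snd))
      obtain ⟨M, hMc, hMq, hMφ, hM⟩ := lift_step φ ρ hρ hρ0 (hcont i) (hcont (i + 1))
        (fun p => (H _).2.1) (fun p => (H _).2.1)
        (fun p => by
          rw [← dist_eq_norm]
          apply hunif
          rw [Prod.dist_eq, dist_self]
          exact max_lt hδ (hdist i p.2)) hLc hLq hLφ
      exact ⟨M, hMc, hMq, hMφ, fun s => (hM _ (by simp [hc0])).trans (hL0 s)⟩
  obtain ⟨L, hLc, hLq, hLφ, hL0⟩ := main (N + 1)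
  let LQ : (Fin n → I) × I → QU A := fun p => ⟨L p, hLq p⟩
  have hLQc : Continuous LQ := hLc.subtype_mk _
  have hj : ∀ p, Joined (LQ p) ⟨0, isQuasiUnitary_zero⟩ := fun p => by
    have h1 : Joined (LQ (p.1, 0)) (LQ p) :=
      ⟨⟨⟨fun t => LQ (p.1, t * p.2), by fun_prop⟩, by simp, by simp⟩⟩
    obtain ⟨q, hq⟩ := (h p.1).2
    have e : LQ (p.1, 0) = ⟨(h p.1 : A), q⟩ := Subtype.ext (hL0 p.1)
    exact h1.symm.trans (e ▸ hq)
  exact ⟨⟨fun p => ⟨L p, hLq p, hj p⟩, hLc.subtype_mk _⟩, hL0, fun s t => by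
    simpa [hcN] using hLφ (s, t)⟩
end

section
/- Let X be a compact Hausdorff space, B a C*-algebra, and let a be a quasi-unitary in C(X, B). Let x ∈ X be such that a(x) is joined to 0 by a continuous path in Û(B). Then there is a closed neighbourhood Y of x in X such that the restriction a|_Y is joined to 0 by a continuous path in Û(C(Y, B)). -/
lemma isQuasiUnitary_iff_mem_unitary {A : Type*} [NonUnitalCStarAlgebra A] (u : A) :
    IsQuasiUnitary u ↔ (1 - (u : Unitization ℂ A)) ∈ unitary (Unitization ℂ A) := by
  have key (v w : A) :
      (1 - (v : Unitization ℂ A)) * (1 - (w : Unitization ℂ A)) = 1 ↔ qmul v w = 0 := by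
    have h : (1 - (v : Unitization ℂ A)) * (1 - (w : Unitization ℂ A)) =
        1 - ((qmul v w : A) : Unitization ℂ A) := by
      simp only [qmul, Unitization.inr_sub, Unitization.inr_add, Unitization.inr_mul]
      noncomm_ring
    rw [h, sub_eq_self, ← Unitization.inr_zero ℂ, Unitization.inr_injective.eq_iff]
  rw [Unitary.mem_iff, star_sub, star_one, ← Unitization.inr_star, key, key, IsQuasiUnitary,
    and_comm]

/-- The retraction of the unitaries of the unitization onto the quasi-unitaries: it sends `λ + b`
to the `u` with `1 - u = conj λ * (λ + b)`. -/
noncomputable def quasiOfUnitary {A : Type*} [NonUnitalCStarAlgebra A]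
    (w : unitary (Unitization ℂ A)) : A :=
  -(star (w : Unitization ℂ A).fst • (w : Unitization ℂ A).snd)

lemma continuous_quasiOfUnitary {A : Type*} [NonUnitalCStarAlgebra A] :
    Continuous (quasiOfUnitary (A := A)) := by
  unfold quasiOfUnitary
  fun_prop

lemma isQuasiUnitary_quasiOfUnitary {A : Type*} [NonUnitalCStarAlgebra A]
    (w : unitary (Unitization ℂ A)) : IsQuasiUnitary (quasiOfUnitary w) := by
  obtain ⟨w, hw⟩ := w
  have h1 : star w.fst * w.fst = 1 := by
    simpa using congrArg (fun z : Unitization ℂ A => z.fst) (Unitary.star_mul_self_of_mem hw)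
  have h2 : w.fst * star w.fst = 1 := by rw [mul_comm, h1]
  have hs : star w.fst ∈ unitary ℂ := by
    rw [Unitary.mem_iff, star_star]
    exact ⟨h2, h1⟩
  have h : (1 - ((quasiOfUnitary ⟨w, hw⟩ : A) : Unitization ℂ A)) = star w.fst • w := by
    ext
    · simpa [sub_eq_add_neg] using h1.symm
    · simp [quasiOfUnitary, sub_eq_add_neg]
  rw [isQuasiUnitary_iff_mem_unitary, h]
  exact Unitary.smul_mem_of_mem hs hw

lemma joinedIn_quasiUnitary_of_norm_sub_lt_two {A : Type*} [NonUnitalCStarAlgebra A] {u v : A}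
    (hu : IsQuasiUnitary u) (hv : IsQuasiUnitary v) (huv : ‖u - v‖ < 2) :
    JoinedIn {w : A | IsQuasiUnitary w} u v := by
  rw [isQuasiUnitary_iff_mem_unitary] at hu hv
  have hj : Joined (⟨_, hu⟩ : unitary (Unitization ℂ A)) ⟨_, hv⟩ := by
    apply Unitary.joined
    have h : (1 - (v : Unitization ℂ A)) - (1 - (u : Unitization ℂ A)) =
        ((u - v : A) : Unitization ℂ A) := by
      rw [Unitization.inr_sub]
      abel
    simpa only [h, Unitization.norm_inr] using huv
  obtain ⟨p⟩ := hj
  refine ⟨(p.map continuous_quasiOfUnitary).cast ?_ ?_, fun t => ?_⟩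
  · simp [quasiOfUnitary, sub_eq_add_neg]
  · simp [quasiOfUnitary, sub_eq_add_neg]
  · exact isQuasiUnitary_quasiOfUnitary (p t)

/-- Let `X` be a compact Hausdorff space, `B` a C*-algebra, and `a` a quasi-unitary in
`C(X, B)`.  If `x ∈ X` is such that `a x` is joined to `0` by a continuous path of
quasi-unitaries of `B`, then there is a closed neighbourhood `Y` of `x` such that the
restriction `a|_Y` is joined to `0` by a continuous path of quasi-unitaries of
`C(Y, B)`. -/
theorem quasiUnitary_restrict_joined_of_fiber_joined
    {X : Type*} [TopologicalSpace X] [CompactSpace X] [T2Space X]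
    {B : Type*} [NonUnitalCStarAlgebra B]
    (a : C(X, B)) (ha : IsQuasiUnitary a) (x : X)
    (hx : JoinedIn {u : B | IsQuasiUnitary u} (a x) 0) :
    ∃ Y : Set X, IsClosed Y ∧ x ∈ interior Y ∧
      JoinedIn {u : C(Y, B) | IsQuasiUnitary u} (a.restrict Y) 0 := by
  have hcont : Continuous fun y => ‖a y - a x‖ := by fun_prop
  have hY : IsClosed {y | ‖a y - a x‖ ≤ 1} := isClosed_le hcont continuous_const
  refine ⟨{y | ‖a y - a x‖ ≤ 1}, hY, ?_, ?_⟩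
  · have hopen : IsOpen {y | ‖a y - a x‖ < 1} := isOpen_lt hcont continuous_const
    have hmem : x ∈ {y | ‖a y - a x‖ < 1} := by simp
    exact interior_maximal (fun y (hy : ‖a y - a x‖ < 1) => hy.le) hopen hmem
  generalize hYdef : {y | ‖a y - a x‖ ≤ 1} = Y at hY
  have : CompactSpace Y := isCompact_iff_compactSpace.mp hY.isCompact
  have hconst {u : B} (hu : IsQuasiUnitary u) : IsQuasiUnitary (ContinuousMap.const Y u) :=
    ⟨ContinuousMap.ext fun _ => hu.1, ContinuousMap.ext fun _ => hu.2⟩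
  have hres : IsQuasiUnitary (a.restrict Y) :=
    ⟨ContinuousMap.ext fun y => DFunLike.congr_fun ha.1 (y : X),
      ContinuousMap.ext fun y => DFunLike.congr_fun ha.2 (y : X)⟩
  have hnorm : ‖a.restrict Y - ContinuousMap.const Y (a x)‖ < 2 := by
    refine lt_of_le_of_lt ((ContinuousMap.norm_le _ zero_le_one).mpr fun y => ?_) one_lt_two
    have hy : (y : X) ∈ {y | ‖a y - a x‖ ≤ 1} := hYdef ▸ y.2
    exact hy
  refine (joinedIn_quasiUnitary_of_norm_sub_lt_two hres (hconst hx.source_mem) hnorm).trans ?_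
  obtain ⟨p, hp⟩ := hx
  exact ⟨p.map (f := ContinuousMap.const Y) ContinuousMap.continuous_const',
    fun t => hconst (hp t)⟩
end
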